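/- Let ω = i₁i₂⋯ and ω' = j₁j₂⋯ be infinite words over {1,…,m}. Suppose that for every k ≥ 1 there exist finite prefixes σ_k ≺ ω and τ_k ≺ ω' with p_{σ_k}, p_{τ_k} ∈ ((k−1)T, kT] and |λ^{−p_{τ_k}}(b_{σ_k} − b_{τ_k})| ≤ (1+λ^{1−T})·max_i|b_i|/(1−λ). Then π(ω) = π(ω'). -/

import Mathlib

open Polynomial Filter

noncomputable section

namespace PVOSC

variable {m : ℕ}

/-- `λ⁻¹` is a Pisot (P.V.) number: an algebraic integer `> 1` all of whose
Galois conjugates other than itself have complex absolute value `< 1`. -/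
def IsPisot (θ : ℝ) : Prop :=
  1 < θ ∧ IsIntegral ℤ θ ∧
    ∀ z : ℂ, aeval z (minpoly ℤ θ) = 0 → z ≠ (θ : ℂ) → ‖z‖ < 1

/-- `p_σ` for a finite word `σ`. -/
def wordP (p : Fin m → ℕ) (σ : List (Fin m)) : ℕ := (σ.map p).sum

/-- The contracting similitude `S_i(x) = λ^{p_i} x + b_i`. -/
def Smap (lam : ℝ) (p : Fin m → ℕ) (b : Fin m → ℝ) (i : Fin m) : ℝ → ℝ :=
  fun x => lam ^ p i * x + b i

/-- `S_σ = S_{i₁} ∘ ⋯ ∘ S_{i_k}` for `σ = i₁ ⋯ i_k`. -/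
def SW (lam : ℝ) (p : Fin m → ℕ) (b : Fin m → ℝ) (σ : List (Fin m)) : ℝ → ℝ :=
  σ.foldr (fun i f => Smap lam p b i ∘ f) id

/-- `b_σ`, the translation part of `S_σ`. -/
def wordB (lam : ℝ) (p : Fin m → ℕ) (b : Fin m → ℝ) (σ : List (Fin m)) : ℝ :=
  SW lam p b σ 0

/-- `B = {0, b₁, …, b_m}`. -/
def Bset (b : Fin m → ℝ) : Set ℝ := insert 0 (Set.range b)

/-- `B − B`. -/
def BB (b : Fin m → ℝ) : Set ℝ := {x | ∃ u ∈ Bset b, ∃ v ∈ Bset b, x = u - v}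

/-- `max_i |b_i|`. -/
def bmax (b : Fin m → ℝ) : ℝ := ⨆ i, |b i|

/-- The set `𝒞`. -/
def Cset (lam : ℝ) (b : Fin m → ℝ) (T : ℕ) : Set ℝ :=
  {x | |x| ≤ (1 + lam ^ (1 - (T : ℤ))) * bmax b / (1 - lam) ∧
    ∃ R : ℝ[X], (∀ n, R.coeff n ∈ BB b) ∧ lam ^ (2 - (T : ℤ)) * x = R.eval lam⁻¹}

/-- The vertex set `Ξ = {n ∈ ℤ : |n| ≤ T−1} × 𝒞`. -/
def Xi (lam : ℝ) (b : Fin m → ℝ) (T : ℕ) : Set (ℤ × ℝ) :=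
  {v | |v.1| ≤ (T : ℤ) - 1 ∧ v.2 ∈ Cset lam b T}

/-- The open set condition. -/
def OSC (lam : ℝ) (p : Fin m → ℕ) (b : Fin m → ℝ) : Prop :=
  ∃ U : Set ℝ, U.Nonempty ∧ IsOpen U ∧ (⋃ i, Smap lam p b i '' U) ⊆ U ∧
    ∀ i j : Fin m, i ≠ j → Smap lam p b i '' U ∩ Smap lam p b j '' U = ∅

/-- The strong separation condition for the attractor `E`. -/
def SSC (lam : ℝ) (p : Fin m → ℕ) (b : Fin m → ℝ) (E : Set ℝ) : Prop :=
  ∀ i j : Fin m, i ≠ j → Smap lam p b i '' E ∩ Smap lam p b j '' E = ∅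

/-- Group law on `ℤ × ℝ`: `(p₁,c₁)·(p₂,c₂) = (p₁+p₂, λ^{p₁} c₂ + c₁)`. -/
def gmul (lam : ℝ) (u v : ℤ × ℝ) : ℤ × ℝ := (u.1 + v.1, lam ^ u.1 * v.2 + u.2)

/-- Inverse for the group law: `(p,c)⁻¹ = (−p, −λ^{−p} c)`. -/
def ginv (lam : ℝ) (u : ℤ × ℝ) : ℤ × ℝ := (-u.1, -(lam ^ (-u.1) * u.2))

/-- The group element `(p_σ, b_σ)` associated to a finite word `σ`. -/
def elem (lam : ℝ) (p : Fin m → ℕ) (b : Fin m → ℝ) (σ : List (Fin m)) : ℤ × ℝ :=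
  ((wordP p σ : ℤ), wordB lam p b σ)

/-- The sequence `(q_k, c_k)` with the recursive structure w.r.t. `({α_k}, {β_k})`:
`recSeq … k = (q_{k+1}, c_{k+1})`, i.e. index `k` corresponds to `(q_{k+1}, c_{k+1})`. -/
def recSeq (lam : ℝ) (p : Fin m → ℕ) (b : Fin m → ℝ) (α β : ℕ → List (Fin m)) : ℕ → ℤ × ℝ
  | 0 => gmul lam (ginv lam (elem lam p b (β 0))) (elem lam p b (α 0))
  | (k+1) => gmul lam (ginv lam (elem lam p b (β (k+1))))
      (gmul lam (recSeq lam p b α β k) (elem lam p b (α (k+1))))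

/-- The edge relation of the directed graph `G` on `Ξ`. -/
def edge (lam : ℝ) (p : Fin m → ℕ) (b : Fin m → ℝ) (T : ℕ) (u v : ℤ × ℝ) : Prop :=
  u ∈ Xi lam b T ∧ v ∈ Xi lam b T ∧
    ∃ α β : List (Fin m), 1 ≤ wordP p α ∧ wordP p α ≤ 2 * T - 1 ∧
      1 ≤ wordP p β ∧ wordP p β ≤ 2 * T - 1 ∧
      v.1 = (wordP p α : ℤ) + u.1 - (wordP p β : ℤ) ∧
      v.2 = lam ^ (-(wordP p β : ℤ)) * u.2 + lam ^ (u.1 - (wordP p β : ℤ)) * wordB lam p b α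
        - lam ^ (-(wordP p β : ℤ)) * wordB lam p b β

/-- `Λ = Ξ ∩ {(p_j − p_i, λ^{−p_i}(b_j − b_i)) : i ≠ j}`. -/
def Lam (lam : ℝ) (p : Fin m → ℕ) (b : Fin m → ℝ) (T : ℕ) : Set (ℤ × ℝ) :=
  Xi lam b T ∩ {v | ∃ i j : Fin m, i ≠ j ∧
    v = ((p j : ℤ) - (p i : ℤ), lam ^ (-(p i : ℤ)) * (b j - b i))}

/-- The length-`k` prefix of an infinite word `ω`. -/
def prefixList (ω : ℕ → Fin m) (k : ℕ) : List (Fin m) := (List.range k).map ω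

/-!
Since `λ^{p_σ}` decays geometrically in the length of a prefix `σ` of `ω`, the translations `b_σ`
converge to `π(ω)`. If `λ^{-p_τ} (b_σ - b_τ)` is bounded for prefixes `σ ≺ ω`, `τ ≺ ω'` with `p_σ`
and `p_τ` arbitrarily large, then `|b_σ - b_τ| = O(|λ|^{p_τ})` along arbitrarily long prefixes, so
the two limits agree.
-/

theorem eq_of_tendsto_of_frequently_dist_le {α X : Type*} [MetricSpace X] {l : Filter α}
    {u v : α → X} {x y : X} {ε : α → ℝ} (hu : Tendsto u l (nhds x)) (hv : Tendsto v l (nhds y))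
    (hε : Tendsto ε l (nhds 0)) (h : ∃ᶠ a in l, dist (u a) (v a) ≤ ε a) : x = y := by
  have hlim : Tendsto (fun a ↦ dist (u a) (v a) - ε a) l (nhds (dist x y)) := by
    simpa only [sub_zero] using (hu.dist hv).sub hε
  exact dist_le_zero.1 (le_of_tendsto_of_frequently hlim (h.mono fun _ ↦ sub_nonpos.2))

theorem frequently_atTop_prod_atTop_of_strictMono {ι κ γ : Type*} [LinearOrder ι] [LinearOrder κ]
    [LinearOrder γ] [Nonempty ι] [Nonempty κ] {f : ι → γ} {g : κ → γ} (hf : StrictMono f)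
    (hg : StrictMono g) {P : ι → κ → Prop} (h : ∀ c, ∃ i j, c ≤ f i ∧ c ≤ g j ∧ P i j) :
    ∃ᶠ q : ι × κ in atTop ×ˢ atTop, P q.1 q.2 := by
  rw [prod_atTop_atTop_eq, frequently_atTop]
  rintro ⟨i₀, j₀⟩
  obtain ⟨i, j, hi, hj, hP⟩ := h (max (f i₀) (g j₀))
  have hi₀ : i₀ ≤ i := hf.le_iff_le.1 (le_of_max_le_left hi)
  have hj₀ : j₀ ≤ j := hg.le_iff_le.1 (le_of_max_le_right hj)
  exact ⟨(i, j), ⟨hi₀, hj₀⟩, hP⟩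

theorem abs_le_pow_mul_of_abs_zpow_neg_mul_le {r x C : ℝ} (hr : r ≠ 0) {n : ℕ}
    (h : |r ^ (-(n : ℤ)) * x| ≤ C) : |x| ≤ |r| ^ n * C := by
  rwa [abs_mul, zpow_neg, zpow_natCast, abs_inv, abs_pow,
    inv_mul_le_iff₀ (pow_pos (abs_pos.2 hr) n)] at h

theorem prefixList_succ (ω : ℕ → Fin m) (n : ℕ) :
    prefixList ω (n + 1) = prefixList ω n ++ [ω n] := by
  simp [prefixList, List.range_succ]

theorem wordP_cons (p : Fin m → ℕ) (i : Fin m) (σ : List (Fin m)) :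
    wordP p (i :: σ) = p i + wordP p σ := by
  simp [wordP]

theorem wordP_prefixList_succ (p : Fin m → ℕ) (ω : ℕ → Fin m) (n : ℕ) :
    wordP p (prefixList ω (n + 1)) = wordP p (prefixList ω n) + p (ω n) := by
  simp [wordP, prefixList_succ]

theorem strictMono_wordP_prefixList {p : Fin m → ℕ} (hp : ∀ i, 1 ≤ p i) (ω : ℕ → Fin m) :
    StrictMono fun n ↦ wordP p (prefixList ω n) :=
  strictMono_nat_of_lt_succ fun n ↦ by
    rw [wordP_prefixList_succ]
    exact Nat.lt_add_of_pos_right (hp (ω n))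

section Translations

variable (lam : ℝ) (p : Fin m → ℕ) (b : Fin m → ℝ)

theorem wordB_cons (i : Fin m) (σ : List (Fin m)) :
    wordB lam p b (i :: σ) = lam ^ p i * wordB lam p b σ + b i :=
  rfl

theorem wordB_append (σ τ : List (Fin m)) :
    wordB lam p b (σ ++ τ) = wordB lam p b σ + lam ^ wordP p σ * wordB lam p b τ := by
  induction σ with
  | nil => simp [wordB, SW, wordP]
  | cons i σ ih =>
    rw [List.cons_append, wordB_cons, wordB_cons, wordP_cons, ih, pow_add]
    ring

theorem wordB_singleton (i : Fin m) : wordB lam p b [i] = b i := by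
  simp [wordB, SW, Smap]

theorem wordB_prefixList_succ (ω : ℕ → Fin m) (n : ℕ) :
    wordB lam p b (prefixList ω (n + 1)) =
      wordB lam p b (prefixList ω n) + lam ^ wordP p (prefixList ω n) * b (ω n) := by
  rw [prefixList_succ, wordB_append, wordB_singleton]

end Translations

section Convergence

variable {lam : ℝ} {p : Fin m → ℕ}

theorem exists_tendsto_wordB_prefixList (hlam : |lam| < 1) (hp : ∀ i, 1 ≤ p i) (b : Fin m → ℝ)
    (ω : ℕ → Fin m) :
    ∃ x : ℝ, Tendsto (fun n ↦ wordB lam p b (prefixList ω n)) atTop (nhds x) := by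
  refine cauchySeq_tendsto_of_complete (cauchySeq_of_le_geometric |lam| ‖b‖ hlam fun n ↦ ?_)
  have hpow : |lam| ^ wordP p (prefixList ω n) ≤ |lam| ^ n :=
    pow_le_pow_of_le_one (abs_nonneg lam) hlam.le (strictMono_wordP_prefixList hp ω).le_apply
  calc
    dist (wordB lam p b (prefixList ω n)) (wordB lam p b (prefixList ω (n + 1)))
        = |b (ω n)| * |lam| ^ wordP p (prefixList ω n) := by
      rw [wordB_prefixList_succ, dist_self_add_right, norm_mul, norm_pow, mul_comm,
        Real.norm_eq_abs, Real.norm_eq_abs]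
    _ ≤ ‖b‖ * |lam| ^ n := by
      gcongr
      exact norm_le_pi_norm b (ω n)

theorem tendsto_pow_wordP_prefixList (hlam : |lam| < 1) (hp : ∀ i, 1 ≤ p i) (ω : ℕ → Fin m) :
    Tendsto (fun n ↦ |lam| ^ wordP p (prefixList ω n)) atTop (nhds 0) :=
  (tendsto_pow_atTop_nhds_zero_of_lt_one (abs_nonneg lam) hlam).comp
    (strictMono_wordP_prefixList hp ω).tendsto_atTop

theorem stmt7_general (hlam0 : lam ≠ 0) (hlam1 : |lam| < 1) (hp : ∀ i, 1 ≤ p i) (b : Fin m → ℝ)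
    (ω ω' : ℕ → Fin m) {C : ℝ}
    (h : ∀ k : ℕ, ∃ n n' : ℕ,
      k ≤ wordP p (prefixList ω n) ∧ k ≤ wordP p (prefixList ω' n') ∧
        |lam ^ (-(wordP p (prefixList ω' n') : ℤ)) *
          (wordB lam p b (prefixList ω n) - wordB lam p b (prefixList ω' n'))| ≤ C) :
    ∃ x : ℝ,
      Tendsto (fun n ↦ wordB lam p b (prefixList ω n)) atTop (nhds x) ∧
      Tendsto (fun n ↦ wordB lam p b (prefixList ω' n)) atTop (nhds x) := by
  obtain ⟨x, hx⟩ := exists_tendsto_wordB_prefixList hlam1 hp b ω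
  obtain ⟨y, hy⟩ := exists_tendsto_wordB_prefixList hlam1 hp b ω'
  have hfreq := frequently_atTop_prod_atTop_of_strictMono (strictMono_wordP_prefixList hp ω)
    (strictMono_wordP_prefixList hp ω') h
  have herror : Tendsto (fun q : ℕ × ℕ ↦ |lam| ^ wordP p (prefixList ω' q.2) * C)
      (atTop ×ˢ atTop) (nhds 0) := by
    simpa only [zero_mul, Function.comp_apply] using
      ((tendsto_pow_wordP_prefixList hlam1 hp ω').comp tendsto_snd).mul_const C
  obtain rfl : x = y :=
    eq_of_tendsto_of_frequently_dist_le (hx.comp tendsto_fst) (hy.comp tendsto_snd) herror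
      (hfreq.mono fun _ ↦ abs_le_pow_mul_of_abs_zpow_neg_mul_le hlam0)
  exact ⟨x, hx, hy⟩

end Convergence

theorem stmt7 (lam : ℝ) (hlam0 : 0 < lam) (hlam1 : lam < 1)
    (hPisot : IsPisot lam⁻¹)
    {m : ℕ} (hm : 2 ≤ m) (p : Fin m → ℕ) (hp : ∀ i, 1 ≤ p i)
    (b : Fin m → ℝ) (hbZ : ∀ i, ∃ z : ℤ, b i = (z : ℝ))
    (T : ℕ) (hT : T = Finset.univ.sup p)
    (ω ω' : ℕ → Fin m)
    (h : ∀ k : ℕ, 1 ≤ k →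
      ∃ σ τ : List (Fin m), (∃ n, σ = prefixList ω n) ∧ (∃ n, τ = prefixList ω' n) ∧
        (k - 1) * T < wordP p σ ∧ wordP p σ ≤ k * T ∧
        (k - 1) * T < wordP p τ ∧ wordP p τ ≤ k * T ∧
        |lam ^ (-(wordP p τ : ℤ)) * (wordB lam p b σ - wordB lam p b τ)| ≤
          (1 + lam ^ (1 - (T : ℤ))) * bmax b / (1 - lam)) :
    ∃ x : ℝ,
      Tendsto (fun k => SW lam p b (prefixList ω k) 0) atTop (nhds x) ∧
      Tendsto (fun k => SW lam p b (prefixList ω' k) 0) atTop (nhds x) := by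
  have hTpos : 0 < T := (hp (ω 0)).trans (hT ▸ Finset.le_sup (Finset.mem_univ (ω 0)))
  refine stmt7_general (C := (1 + lam ^ (1 - (T : ℤ))) * bmax b / (1 - lam)) hlam0.ne'
    ((abs_of_pos hlam0).trans_lt hlam1) hp b ω ω' fun k ↦ ?_
  obtain ⟨_, _, ⟨n, rfl⟩, ⟨n', rfl⟩, hσ, -, hτ, -, hbound⟩ := h (k + 1) k.succ_pos
  have hkT : k ≤ k * T := Nat.le_mul_of_pos_right k hTpos
  exact ⟨n, n', hkT.trans hσ.le, hkT.trans hτ.le, hbound⟩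

end PVOSC
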